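/- Fix τ ∈ ℍ, n₀,n₁,n₂,n₃, A, B ∈ ℂ and p ∈ ℂ with p ∉ (1/2)Λ_τ, and let I(z;τ) be the generalized Lamé potential. Suppose 2n_i ∉ ℤ for some i ∈ {0,1,2,3}. If Φ is a meromorphic function on ℂ that is even (Φ(−z) = Φ(z)), elliptic with periods 1 and τ, and satisfies the second symmetric power equation Φ‴(z) − 4I(z;τ)Φ′(z) − 2I′(z;τ)Φ(z) = 0 away from the singular set, then Φ ≡ 0. -/

import Mathlib

open Complex Filter Topology Asymptotics

noncomputable section

/-- membership in the lattice `Λ_τ = ℤ + τℤ`. -/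
def InLattice (τ z : ℂ) : Prop := ∃ m n : ℤ, z = (m : ℂ) + (n : ℂ) * τ

/-- the half-period generators `ω₀ = 0, ω₁ = 1, ω₂ = τ, ω₃ = 1 + τ`. -/
def halfp (τ : ℂ) : Fin 4 → ℂ := ![0, 1, τ, 1 + τ]

/-- the Weierstrass elliptic function `℘(z|τ)`. -/
def wp (τ z : ℂ) : ℂ :=
  z⁻¹ ^ 2 + ∑' w : {w : ℤ × ℤ // w ≠ 0},
    ((z - ((w.1.1 : ℂ) + (w.1.2 : ℂ) * τ))⁻¹ ^ 2 - ((w.1.1 : ℂ) + (w.1.2 : ℂ) * τ)⁻¹ ^ 2)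

/-- `℘′(z|τ)`, the `z`-derivative of `℘`. -/
def wpd (τ z : ℂ) : ℂ := deriv (wp τ) z

/-- `℘″(z|τ)`. -/
def wpdd (τ z : ℂ) : ℂ := deriv (wpd τ) z

def e1 (τ : ℂ) : ℂ := wp τ (1 / 2)
def e2 (τ : ℂ) : ℂ := wp τ (τ / 2)
def e3 (τ : ℂ) : ℂ := wp τ ((1 + τ) / 2)

def g2 (τ : ℂ) : ℂ := -4 * (e1 τ * e2 τ + e1 τ * e3 τ + e2 τ * e3 τ)

/-- `zeta` is the Weierstrass zeta function: for each `τ ∈ ℍ`, `zeta τ` is odd, satisfies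
`∂ζ/∂z = -℘` off the lattice, and `ζ(z|τ) - 1/z → 0` as `z → 0`. -/
def IsWeierstrassZeta (zeta : ℂ → ℂ → ℂ) : Prop :=
  ∀ τ : ℂ, 0 < τ.im →
    (∀ z : ℂ, zeta τ (-z) = - zeta τ z) ∧
    (∀ z : ℂ, ¬ InLattice τ z → HasDerivAt (zeta τ) (- wp τ z) z) ∧
    Tendsto (fun z => zeta τ z - z⁻¹) (𝓝[≠] (0 : ℂ)) (𝓝 0)

/-- `eta1 τ = ζ(z+1|τ) - ζ(z|τ)` is the first quasi-period. -/
def IsEta1 (zeta : ℂ → ℂ → ℂ) (eta1 : ℂ → ℂ) : Prop :=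
  ∀ τ : ℂ, 0 < τ.im → ∀ z : ℂ, ¬ InLattice τ z →
    eta1 τ = zeta τ (z + 1) - zeta τ z

/-- `eta2 τ = ζ(z+τ|τ) - ζ(z|τ)` is the second quasi-period. -/
def IsEta2 (zeta : ℂ → ℂ → ℂ) (eta2 : ℂ → ℂ) : Prop :=
  ∀ τ : ℂ, 0 < τ.im → ∀ z : ℂ, ¬ InLattice τ z →
    eta2 τ = zeta τ (z + τ) - zeta τ z

/-- `sigma` is the Weierstrass sigma function: entire, odd, with
`∂/∂z log σ = ζ` off the lattice and `σ(z|τ)/z → 1` as `z → 0`. -/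
def IsWeierstrassSigma (zeta sigma : ℂ → ℂ → ℂ) : Prop :=
  ∀ τ : ℂ, 0 < τ.im →
    (∀ z : ℂ, sigma τ (-z) = - sigma τ z) ∧
    Differentiable ℂ (sigma τ) ∧
    (∀ z : ℂ, ¬ InLattice τ z → HasDerivAt (sigma τ) (zeta τ z * sigma τ z) z) ∧
    Tendsto (fun z => sigma τ z / z) (𝓝[≠] (0 : ℂ)) (𝓝 1)

/-- the Hamiltonian system (142) for `(p(τ), A(τ))` on `V`. -/
def HamSystem (n : Fin 4 → ℂ) (zeta : ℂ → ℂ → ℂ) (eta1 : ℂ → ℂ)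
    (V : Set ℂ) (p A : ℂ → ℂ) : Prop :=
  ∀ τ ∈ V,
    HasDerivAt p ((-Complex.I / (4 * (Real.pi : ℂ))) *
      (2 * A τ - zeta τ (2 * p τ) + 2 * p τ * eta1 τ)) τ ∧
    HasDerivAt A ((Complex.I / (4 * (Real.pi : ℂ))) *
      ((2 * wp τ (2 * p τ) + 2 * eta1 τ) * A τ - (3 / 2) * wpd τ (2 * p τ)
        - ∑ k : Fin 4, n k * (n k + 1) * wpd τ (p τ + halfp τ k / 2))) τ

/-- the generalized Lamé potential `I(z;τ)`. -/
def Ipot (n : Fin 4 → ℂ) (zeta : ℂ → ℂ → ℂ) (A B p τ z : ℂ) : ℂ :=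
  (∑ k : Fin 4, n k * (n k + 1) * wp τ (z + halfp τ k / 2))
    + (3 / 4) * (wp τ (z + p) + wp τ (z - p))
    + A * (zeta τ (z + p) - zeta τ (z - p)) + B

end

/-!
Let `z₀ = -ω_i/2`. There the potential has a double pole with leading coefficient `n_i (n_i + 1)`.
If `Φ ~ a (z - z₀)ᵏ` with `a ≠ 0`, then the coefficient of `(z - z₀)ᵏ⁻³` in the equation gives
`(k - 1) (k + 2 n_i) (k - 2 - 2 n_i) = 0`, which forces `k = 1` when `2 n_i` is not an integer.
But an even function with period `ω_i` is symmetric about `z₀`, so its order `k` there is even.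
Hence `Φ` has infinite order at `z₀` and vanishes by the identity theorem.
-/

section LeadingTerm

variable {𝕜 : Type*} [NontriviallyNormedField 𝕜] {f g : 𝕜 → 𝕜} {z₀ a b : 𝕜} {k l : ℤ}

/-- `f` is meromorphic at `z₀` with Laurent expansion `a (z - z₀)ᵏ + O((z - z₀)ᵏ⁺¹)`. The
coefficient `a` may vanish, so that the notion is stable under sums and derivatives. -/
def HasLeadingTerm (f : 𝕜 → 𝕜) (z₀ : 𝕜) (k : ℤ) (a : 𝕜) : Prop :=
  ∃ g : 𝕜 → 𝕜, AnalyticAt 𝕜 g z₀ ∧ g z₀ = a ∧ f =ᶠ[𝓝[≠] z₀] fun z => (z - z₀) ^ k * g z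

namespace HasLeadingTerm

protected theorem zpow (z₀ : 𝕜) (k : ℤ) : HasLeadingTerm (fun z => (z - z₀) ^ k) z₀ k 1 :=
  ⟨fun _ => 1, analyticAt_const, rfl, by simp⟩

theorem of_analyticAt (hf : AnalyticAt 𝕜 f z₀) : HasLeadingTerm f z₀ 0 (f z₀) :=
  ⟨f, hf, rfl, by simp⟩

theorem of_lt (hf : HasLeadingTerm f z₀ k a) (hl : l < k) : HasLeadingTerm f z₀ l 0 := by
  obtain ⟨g, hg, -, hfg⟩ := hf
  lift k - l to ℕ using by omega with d hd
  refine ⟨fun z => (z - z₀) ^ d * g z, by fun_prop, ?_, ?_⟩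
  · have hd₀ : d ≠ 0 := by omega
    simp [hd₀]
  · filter_upwards [hfg, self_mem_nhdsWithin] with z hz hne
    rw [hz, ← mul_assoc, ← zpow_natCast, ← zpow_add₀ (sub_ne_zero.2 hne), hd, add_sub_cancel]

protected theorem add (hf : HasLeadingTerm f z₀ k a) (hg : HasLeadingTerm g z₀ k b) :
    HasLeadingTerm (fun z => f z + g z) z₀ k (a + b) := by
  obtain ⟨F, hF, rfl, hfF⟩ := hf
  obtain ⟨G, hG, rfl, hgG⟩ := hg
  refine ⟨fun z => F z + G z, hF.add hG, rfl, ?_⟩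
  filter_upwards [hfF, hgG] with z hz hz'
  rw [hz, hz', mul_add]

protected theorem mul (hf : HasLeadingTerm f z₀ k a) (hg : HasLeadingTerm g z₀ l b) :
    HasLeadingTerm (fun z => f z * g z) z₀ (k + l) (a * b) := by
  obtain ⟨F, hF, rfl, hfF⟩ := hf
  obtain ⟨G, hG, rfl, hgG⟩ := hg
  refine ⟨fun z => F z * G z, hF.mul hG, rfl, ?_⟩
  filter_upwards [hfF, hgG, self_mem_nhdsWithin] with z hz hz' hne
  rw [hz, hz', zpow_add₀ (sub_ne_zero.2 hne), mul_mul_mul_comm]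

theorem const_mul (c : 𝕜) (hf : HasLeadingTerm f z₀ k a) :
    HasLeadingTerm (fun z => c * f z) z₀ k (c * a) := by
  simpa using (of_analyticAt (analyticAt_const (v := c))).mul hf

protected theorem sub (hf : HasLeadingTerm f z₀ k a) (hg : HasLeadingTerm g z₀ k b) :
    HasLeadingTerm (fun z => f z - g z) z₀ k (a - b) := by
  simpa [← sub_eq_add_neg] using hf.add (hg.const_mul (-1))

protected theorem sum {ι : Type*} (s : Finset ι) {F : ι → 𝕜 → 𝕜} {c : ι → 𝕜}
    (hF : ∀ j ∈ s, HasLeadingTerm (F j) z₀ k (c j)) :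
    HasLeadingTerm (fun z => ∑ j ∈ s, F j z) z₀ k (∑ j ∈ s, c j) := by
  choose! G hG hGc hFG using hF
  refine ⟨fun z => ∑ j ∈ s, G j z, s.analyticAt_fun_sum hG, Finset.sum_congr rfl hGc, ?_⟩
  filter_upwards [(eventually_all_finset s).2 hFG] with z hz
  rw [Finset.mul_sum, Finset.sum_congr rfl hz]

theorem comp_add_const {c : 𝕜} (hf : HasLeadingTerm f (z₀ + c) k a) :
    HasLeadingTerm (fun z => f (z + c)) z₀ k a := by
  obtain ⟨g, hg, rfl, hfg⟩ := hf
  refine ⟨fun z => g (z + c), by fun_prop, rfl, ?_⟩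
  rw [← map_add_right_nhdsNE] at hfg
  filter_upwards [hfg] with z hz
  rw [hz, add_sub_add_right_eq_sub]

theorem comp_const_sub {c : 𝕜} (hf : HasLeadingTerm f (c - z₀) k a) :
    HasLeadingTerm (fun z => f (c - z)) z₀ k ((-1) ^ k * a) := by
  obtain ⟨g, hg, rfl, hfg⟩ := hf
  have hreflect : Tendsto (fun z => c - z) (𝓝[≠] z₀) (𝓝[≠] (c - z₀)) :=
    ((hasDerivAt_id z₀).const_sub c).tendsto_nhdsNE (neg_ne_zero.2 one_ne_zero)
  refine ⟨fun z => (-1) ^ k * g (c - z), by fun_prop, rfl, ?_⟩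
  filter_upwards [hreflect.eventually hfg] with z hz
  rw [hz, show c - z - (c - z₀) = -1 * (z - z₀) by ring, mul_zpow, mul_left_comm, mul_assoc]

protected theorem deriv [CompleteSpace 𝕜] (hf : HasLeadingTerm f z₀ k a) :
    HasLeadingTerm (deriv f) z₀ (k - 1) (k * a) := by
  obtain ⟨g, hg, rfl, hfg⟩ := hf
  refine ⟨fun z => k * g z + (z - z₀) * deriv g z, (analyticAt_const.mul hg).add
    ((analyticAt_id.sub analyticAt_const).mul hg.deriv), by simp, ?_⟩
  filter_upwards [eventually_eventually_nhdsWithin.2 hfg, self_mem_nhdsWithin,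
    eventually_nhdsWithin_of_eventually_nhds hg.eventually_analyticAt] with z hz hne hgz
  have hsub : z - z₀ ≠ 0 := sub_ne_zero.2 hne
  have hfz : f =ᶠ[𝓝 z] fun w => (w - z₀) ^ k * g w := by
    rwa [isOpen_compl_singleton.nhdsWithin_eq hne] at hz
  have hpow : HasDerivAt (fun w => (w - z₀) ^ k) (k * (z - z₀) ^ (k - 1)) z :=
    (hasDerivAt_zpow k (z - z₀) (.inl hsub)).comp_sub_const z z₀
  rw [hfz.deriv_eq, (hpow.fun_mul hgz.differentiableAt.hasDerivAt).deriv,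
    show (z - z₀) ^ k = (z - z₀) ^ (k - 1) * (z - z₀) by
      rw [← zpow_add_one₀ hsub, sub_add_cancel]]
  ring

theorem eq_zero_of_eventually_eq_zero (hf : HasLeadingTerm f z₀ k a)
    (h₀ : ∀ᶠ z in 𝓝[≠] z₀, f z = 0) : a = 0 := by
  obtain ⟨g, hg, rfl, hfg⟩ := hf
  have hg₀ : ∀ᶠ z in 𝓝[≠] z₀, g z = 0 := by
    filter_upwards [hfg, h₀, self_mem_nhdsWithin] with z hz hz₀ hne
    exact (mul_eq_zero.1 (hz.symm.trans hz₀)).resolve_left (zpow_ne_zero k (sub_ne_zero.2 hne))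
  exact (hg.frequently_zero_iff_eventually_zero.1 hg₀.frequently).self_of_nhds

theorem even_of_symmetric [NeZero (2 : 𝕜)] (hf : HasLeadingTerm f z₀ k a) (ha : a ≠ 0)
    (hsymm : ∀ᶠ z in 𝓝[≠] z₀, f (2 * z₀ - z) = f z) : Even k := by
  have hfix : 2 * z₀ - z₀ = z₀ := by ring
  have hreflect : HasLeadingTerm (fun z => f (2 * z₀ - z)) z₀ k ((-1) ^ k * a) :=
    comp_const_sub (by rwa [hfix])
  have hcoeff : (-1) ^ k * a - a = 0 :=
    (hreflect.sub hf).eq_zero_of_eventually_eq_zero (hsymm.mono fun _ => sub_eq_zero.2)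
  by_contra hk
  rw [(Int.not_even_iff_odd.1 hk).neg_one_zpow] at hcoeff
  have htwo : 2 * a = 0 := by linear_combination -hcoeff
  exact ha ((mul_eq_zero.1 htwo).resolve_left two_ne_zero)

end HasLeadingTerm

theorem exists_hasLeadingTerm_of_meromorphicOrderAt_ne_top (hf : MeromorphicAt f z₀)
    (htop : meromorphicOrderAt f z₀ ≠ ⊤) :
    ∃ k : ℤ, ∃ a ≠ 0, HasLeadingTerm f z₀ k a := by
  obtain ⟨g, hg, hg₀, hfg⟩ := (meromorphicOrderAt_ne_top_iff hf).1 htop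
  exact ⟨_, g z₀, hg₀, g, hg, rfl, hfg⟩

/-- The second symmetric power of `y″ = I y`: the operator `f ↦ f‴ - 4 I f′ - 2 I′ f`, which
annihilates the products of two solutions. -/
noncomputable def symmSquareOp (I f : 𝕜 → 𝕜) (z : 𝕜) : 𝕜 :=
  deriv (deriv (deriv f)) z - 4 * I z * deriv f z - 2 * deriv I z * f z

protected theorem HasLeadingTerm.symmSquareOp [CompleteSpace 𝕜] {I : 𝕜 → 𝕜} {c : 𝕜}
    (hf : HasLeadingTerm f z₀ k a) (hI : HasLeadingTerm I z₀ (-2) c) :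
    HasLeadingTerm (symmSquareOp I f) z₀ (k - 3) ((k - 1) * (k * (k - 2) - 4 * c) * a) := by
  have hf₃ : HasLeadingTerm (deriv (deriv (deriv f))) z₀ (k - 3)
      (k * (k - 1) * (k - 2) * a) := by
    convert hf.deriv.deriv.deriv using 1 <;> push_cast <;> ring
  have hIf' : HasLeadingTerm (fun z => 4 * I z * deriv f z) z₀ (k - 3) (4 * c * (k * a)) := by
    convert (hI.const_mul 4).mul hf.deriv using 1
    ring
  have hI'f : HasLeadingTerm (fun z => 2 * deriv I z * f z) z₀ (k - 3) (2 * (-2 * c) * a) := by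
    convert (hI.deriv.const_mul 2).mul hf using 1 <;> push_cast <;> ring
  rw [show ((k : 𝕜) - 1) * (k * (k - 2) - 4 * c) * a =
    k * (k - 1) * (k - 2) * a - 4 * c * (k * a) - 2 * (-2 * c) * a by ring]
  exact (hf₃.sub hIf').sub hI'f

theorem meromorphicOrderAt_eq_top_of_symmSquareOp_eq_zero [CompleteSpace 𝕜] [CharZero 𝕜]
    {I : 𝕜 → 𝕜} {ν : 𝕜} (hν : ∀ m : ℤ, 2 * ν ≠ m) (hI : HasLeadingTerm I z₀ (-2) (ν * (ν + 1)))
    (hf : MeromorphicAt f z₀) (hsymm : ∀ᶠ z in 𝓝[≠] z₀, f (2 * z₀ - z) = f z)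
    (heq : ∀ᶠ z in 𝓝[≠] z₀, symmSquareOp I f z = 0) : meromorphicOrderAt f z₀ = ⊤ := by
  by_contra htop
  obtain ⟨k, a, ha, hfa⟩ := exists_hasLeadingTerm_of_meromorphicOrderAt_ne_top hf htop
  have heven : Even k := hfa.even_of_symmetric ha hsymm
  have hindicial : (k - 1) * (k * (k - 2) - 4 * (ν * (ν + 1))) = (0 : 𝕜) :=
    (mul_eq_zero.1 ((hfa.symmSquareOp hI).eq_zero_of_eventually_eq_zero heq)).resolve_right ha
  have hroots : ((k : 𝕜) - 1) * ((2 * ν + k) * (2 * ν - (k - 2))) = 0 := by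
    linear_combination -hindicial
  rcases mul_eq_zero.1 hroots with h | h
  · have hk : k = 1 := by exact_mod_cast sub_eq_zero.1 h
    simp [hk] at heven
  rcases mul_eq_zero.1 h with h | h
  · exact hν (-k) (by push_cast; linear_combination h)
  · exact hν (k - 2) (by push_cast; linear_combination h)

theorem eq_zero_of_meromorphicOrderAt_eq_top {U : Set 𝕜} {z : 𝕜} (hf : MeromorphicOn f U)
    (hU : IsPreconnected U) (hz₀ : z₀ ∈ U) (htop : meromorphicOrderAt f z₀ = ⊤) (hz : z ∈ U)
    (hfz : AnalyticAt 𝕜 f z) : f z = 0 := by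
  have htop' : meromorphicOrderAt f z = ⊤ := by
    by_contra hne
    exact hf.meromorphicOrderAt_ne_top_of_isPreconnected hU hz hz₀ hne htop
  exact (hfz.frequently_zero_iff_eventually_zero.1
    (meromorphicOrderAt_eq_top_iff.1 htop').frequently).self_of_nhds

end LeadingTerm

theorem hasLeadingTerm_weierstrassP (L : PeriodPair) (l : L.lattice) :
    HasLeadingTerm L.weierstrassP l (-2) 1 := by
  have hreg : AnalyticAt ℂ (fun z => L.weierstrassPExcept l z - 1 / (l : ℂ) ^ 2) l :=
    (L.analyticAt_weierstrassPExcept l).sub analyticAt_const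
  convert (HasLeadingTerm.zpow (l : ℂ) (-2)).add
    ((HasLeadingTerm.of_analyticAt hreg).of_lt (l := -2) (by norm_num)) using 1
  · ext z
    rw [← L.weierstrassPExcept_add l z, zpow_neg, zpow_ofNat]
    ring
  · simp

/-- The period pair `(1, τ)`, through which `InLattice` and `wp` are compared with the library's
period lattices and Weierstrass function. -/
def upperPeriodPair (τ : ℂ) (hτ : 0 < τ.im) : PeriodPair where
  ω₁ := 1
  ω₂ := τ
  indep := by
    rw [LinearIndependent.pair_iff]
    intro s t h
    have ht : t = 0 := by simpa [hτ.ne'] using congrArg Complex.im h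
    exact ⟨by simpa [ht] using congrArg Complex.re h, ht⟩

section HalfPeriods

variable {τ : ℂ} {z : ℂ} {i k : Fin 4}

theorem inLattice_iff_mem_lattice (hτ : 0 < τ.im) :
    InLattice τ z ↔ z ∈ (upperPeriodPair τ hτ).lattice := by
  simp only [PeriodPair.mem_lattice, InLattice, upperPeriodPair, mul_one, eq_comm]

theorem halfp_eq (τ : ℂ) (i : Fin 4) :
    halfp τ i = ((i % 2 : ℕ) : ℂ) + ((i / 2 : ℕ) : ℂ) * τ := by
  fin_cases i <;> simp [halfp]

theorem inLattice_halfp (τ : ℂ) (i : Fin 4) : InLattice τ (halfp τ i) :=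
  ⟨(i % 2 : ℕ), (i / 2 : ℕ), mod_cast halfp_eq τ i⟩

theorem even_of_inLattice_div_two (hτ : 0 < τ.im) {a b : ℤ}
    (h : InLattice τ ((a + b * τ) / 2)) : Even a ∧ Even b := by
  obtain ⟨m, n, h⟩ := h
  have hcoeff := LinearIndependent.pair_iff.1 (upperPeriodPair τ hτ).indep
    ((a - 2 * m : ℤ) : ℝ) ((b - 2 * n : ℤ) : ℝ) (by
      simp only [upperPeriodPair, Complex.real_smul, Complex.ofReal_intCast]
      push_cast
      linear_combination 2 * h)
  have ha : a - 2 * m = 0 := mod_cast hcoeff.1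
  have hb : b - 2 * n = 0 := mod_cast hcoeff.2
  exact ⟨⟨m, by omega⟩, ⟨n, by omega⟩⟩

theorem eq_of_inLattice_halfp_sub_halfp_div_two (hτ : 0 < τ.im)
    (h : InLattice τ ((halfp τ k - halfp τ i) / 2)) : k = i := by
  have hcoord : halfp τ k - halfp τ i = (((k % 2 : ℕ) : ℤ) - ((i % 2 : ℕ) : ℤ) : ℤ) +
      (((k / 2 : ℕ) : ℤ) - ((i / 2 : ℕ) : ℤ) : ℤ) * τ := by
    simp only [halfp_eq, Int.cast_sub, Int.cast_natCast]
    ring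
  rw [hcoord] at h
  obtain ⟨⟨r, hr⟩, ⟨s, hs⟩⟩ := even_of_inLattice_div_two hτ h
  omega

theorem eventually_not_inLattice_add (hτ : 0 < τ.im) (z c : ℂ) :
    ∀ᶠ w in 𝓝[≠] z, ¬ InLattice τ (w + c) := by
  have hiso : ∀ᶠ w in 𝓝[≠] (z + c), ¬ InLattice τ w := by
    filter_upwards [self_mem_nhdsWithin, mem_nhdsWithin_of_mem_nhds
      ((upperPeriodPair τ hτ).compl_lattice_sdiff_singleton_mem_nhds (z + c))] with w hne hw
    exact fun h => hw ⟨(inLattice_iff_mem_lattice hτ).1 h, hne⟩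
  rwa [← map_add_right_nhdsNE] at hiso

theorem wp_eq_weierstrassP (hτ : 0 < τ.im) : wp τ = (upperPeriodPair τ hτ).weierstrassP := by
  set L := upperPeriodPair τ hτ
  ext z
  have hcoe (w : ℤ × ℤ) : (L.latticeEquivProd.symm w : ℂ) = w.1 + w.2 * τ := by
    rw [L.latticeEquiv_symm_apply]
    simp [L, upperPeriodPair]
  have hsum := L.latticeEquivProd.symm.toEquiv.hasSum_iff.2 (L.hasSum_weierstrassP z)
  rw [← hsum.tsum_eq, ← hsum.summable.tsum_subtype_add_tsum_subtype_compl {0},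
    tsum_singleton, wp]
  congr 1
  · simp
  · exact tsum_congr fun w => by simp [hcoe]

theorem analyticAt_wp (hτ : 0 < τ.im) (hz : ¬ InLattice τ z) : AnalyticAt ℂ (wp τ) z := by
  rw [wp_eq_weierstrassP hτ]
  exact (upperPeriodPair τ hτ).analyticOnNhd_weierstrassP z
    (mt (inLattice_iff_mem_lattice hτ).2 hz)

theorem IsWeierstrassZeta.analyticAt {zeta : ℂ → ℂ → ℂ} (hzeta : IsWeierstrassZeta zeta)
    (hτ : 0 < τ.im) (hz : ¬ InLattice τ z) : AnalyticAt ℂ (zeta τ) z := by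
  have hd : DifferentiableOn ℂ (zeta τ) ((upperPeriodPair τ hτ).lattice : Set ℂ)ᶜ := fun w hw =>
    ((hzeta τ hτ).2.1 w (mt (inLattice_iff_mem_lattice hτ).1 hw)).differentiableAt
      |>.differentiableWithinAt
  exact hd.analyticAt ((upperPeriodPair τ hτ).isClosed_lattice.isOpen_compl.mem_nhds
    (mt (inLattice_iff_mem_lattice hτ).2 hz))

theorem hasLeadingTerm_wp_add_halfp (hτ : 0 < τ.im) (i k : Fin 4) :
    HasLeadingTerm (fun z => wp τ (z + halfp τ k / 2)) (-(halfp τ i / 2)) (-2)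
      (if k = i then 1 else 0) := by
  refine HasLeadingTerm.comp_add_const ?_
  rw [show -(halfp τ i / 2) + halfp τ k / 2 = (halfp τ k - halfp τ i) / 2 by ring]
  split_ifs with hki
  · subst hki
    simpa [wp_eq_weierstrassP hτ] using hasLeadingTerm_weierstrassP (upperPeriodPair τ hτ) 0
  · have hoff := mt (eq_of_inLattice_halfp_sub_halfp_div_two hτ) hki
    exact (HasLeadingTerm.of_analyticAt (analyticAt_wp hτ hoff)).of_lt (by norm_num)

theorem hasLeadingTerm_Ipot (hτ : 0 < τ.im) {zeta : ℂ → ℂ → ℂ} (hzeta : IsWeierstrassZeta zeta)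
    (n : Fin 4 → ℂ) (A B : ℂ) {p : ℂ} (hp : ¬ InLattice τ (p + halfp τ i / 2)) :
    HasLeadingTerm (Ipot n zeta A B p τ) (-(halfp τ i / 2)) (-2) (n i * (n i + 1)) := by
  have hadd : ¬ InLattice τ (-(halfp τ i / 2) + p) := by
    have hhalfp := (inLattice_iff_mem_lattice hτ).1 (inLattice_halfp τ i)
    rwa [show -(halfp τ i / 2) + p = p + halfp τ i / 2 - halfp τ i by ring,
      inLattice_iff_mem_lattice hτ, Submodule.sub_mem_iff_left _ hhalfp,
      ← inLattice_iff_mem_lattice hτ]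
  have hsub : ¬ InLattice τ (-(halfp τ i / 2) - p) := by
    rwa [show -(halfp τ i / 2) - p = -(p + halfp τ i / 2) by ring,
      inLattice_iff_mem_lattice hτ, neg_mem_iff, ← inLattice_iff_mem_lattice hτ]
  have hwadd := analyticAt_wp hτ hadd
  have hwsub := analyticAt_wp hτ hsub
  have hzadd := hzeta.analyticAt hτ hadd
  have hzsub := hzeta.analyticAt hτ hsub
  have hreg : AnalyticAt ℂ (fun z => 3 / 4 * (wp τ (z + p) + wp τ (z - p))
      + A * (zeta τ (z + p) - zeta τ (z - p)) + B) (-(halfp τ i / 2)) := by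
    fun_prop
  have hpole := HasLeadingTerm.sum Finset.univ fun k _ =>
    (hasLeadingTerm_wp_add_halfp hτ i k).const_mul (n k * (n k + 1))
  convert hpole.add ((HasLeadingTerm.of_analyticAt hreg).of_lt (l := -2) (by norm_num)) using 1
  · ext z
    simp only [Ipot]
    ring
  · simp

theorem not_inLattice_add_halfp_div_two (hτ : 0 < τ.im) (i : Fin 4)
    (hz : ¬ InLattice τ (2 * z)) : ¬ InLattice τ (z + halfp τ i / 2) := by
  intro h
  have hhalfp := inLattice_halfp τ i
  rw [inLattice_iff_mem_lattice hτ] at hz h hhalfp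
  refine hz ?_
  convert sub_mem (add_mem h h) hhalfp using 1
  ring

theorem periodic_halfp {α : Type*} {f : ℂ → α} (h₁ : Function.Periodic f 1)
    (hτ : Function.Periodic f τ) (i : Fin 4) : Function.Periodic f (halfp τ i) := by
  rw [halfp_eq]
  simpa using (h₁.nat_mul (i % 2)).add_period (hτ.nat_mul (i / 2))

theorem apply_neg_halfp_sub {α : Type*} {f : ℂ → α} (heven : Function.Even f)
    (h₁ : Function.Periodic f 1) (hτ : Function.Periodic f τ) (i : Fin 4) (z : ℂ) :
    f (-halfp τ i - z) = f z := by
  rw [← neg_add', heven, add_comm, periodic_halfp h₁ hτ i z]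

end HalfPeriods

theorem even_elliptic_solution_vanishes_general {τ : ℂ} (hτ : 0 < τ.im) {n : Fin 4 → ℂ}
    {A B p : ℂ} {zeta : ℂ → ℂ → ℂ} (hzeta : IsWeierstrassZeta zeta) {i : Fin 4}
    (hp : ¬ InLattice τ (p + halfp τ i / 2)) (hn : ∀ m : ℤ, 2 * n i ≠ m) {Φ : ℂ → ℂ}
    (hmero : ∀ z, MeromorphicAt Φ z) (hsymm : ∀ z, Φ (-halfp τ i - z) = Φ z)
    (heq : ∀ z, ¬ InLattice τ (z - p) → ¬ InLattice τ (z + p) →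
      (∀ k, ¬ InLattice τ (z + halfp τ k / 2)) → AnalyticAt ℂ Φ z →
      symmSquareOp (Ipot n zeta A B p τ) Φ z = 0)
    (z : ℂ) (hz : AnalyticAt ℂ Φ z) : Φ z = 0 := by
  set z₀ := -(halfp τ i / 2) with hz₀
  have hreflect (z : ℂ) : Φ (2 * z₀ - z) = Φ z := by
    rw [← hsymm z, hz₀, mul_neg, mul_div_cancel₀ _ two_ne_zero]
  have heq₀ : ∀ᶠ z in 𝓝[≠] z₀, symmSquareOp (Ipot n zeta A B p τ) Φ z = 0 := by
    filter_upwards [eventually_not_inLattice_add hτ z₀ (-p), eventually_not_inLattice_add hτ z₀ p,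
      eventually_all.2 fun k => eventually_not_inLattice_add hτ z₀ (halfp τ k / 2),
      (hmero z₀).eventually_analyticAt] with z hsub hadd hhalfp hΦz
    exact heq z hsub hadd hhalfp hΦz
  have htop : meromorphicOrderAt Φ z₀ = ⊤ :=
    meromorphicOrderAt_eq_top_of_symmSquareOp_eq_zero hn (hasLeadingTerm_Ipot hτ hzeta n A B hp)
      (hmero z₀) (.of_forall hreflect) heq₀
  exact eq_zero_of_meromorphicOrderAt_eq_top (U := Set.univ) (fun w _ => hmero w)
    isPreconnected_univ (Set.mem_univ z₀) htop (Set.mem_univ z) hz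

/-- uniqueness of even elliptic solutions of the second symmetric power
equation, cf. the Corollary after Theorem 2.6: if `2n_i ∉ ℤ` for some `i`, then any even
elliptic meromorphic solution `Φ` of `Φ‴ - 4IΦ′ - 2I′Φ = 0` vanishes identically. -/
theorem even_elliptic_solution_vanishes
    (τ : ℂ) (hτ : 0 < τ.im) (n : Fin 4 → ℂ) (A B p : ℂ)
    (zeta : ℂ → ℂ → ℂ) (hzeta : IsWeierstrassZeta zeta)
    (hp : ¬ InLattice τ (2 * p))
    (hn : ∃ i : Fin 4, ∀ m : ℤ, 2 * n i ≠ (m : ℂ))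
    (Φ : ℂ → ℂ)
    (hmero : ∀ z : ℂ, MeromorphicAt Φ z)
    (heven : ∀ z : ℂ, Φ (-z) = Φ z)
    (hper1 : ∀ z : ℂ, Φ (z + 1) = Φ z)
    (hper2 : ∀ z : ℂ, Φ (z + τ) = Φ z)
    (heq : ∀ z : ℂ, ¬ InLattice τ (z - p) → ¬ InLattice τ (z + p) →
      (∀ k : Fin 4, ¬ InLattice τ (z + halfp τ k / 2)) →
      AnalyticAt ℂ Φ z →
      deriv (deriv (deriv Φ)) z - 4 * Ipot n zeta A B p τ z * deriv Φ z
        - 2 * deriv (fun w => Ipot n zeta A B p τ w) z * Φ z = 0) :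
    ∀ z : ℂ, AnalyticAt ℂ Φ z → Φ z = 0 := by
  obtain ⟨i, hi⟩ := hn
  exact even_elliptic_solution_vanishes_general hτ hzeta
    (not_inLattice_add_halfp_div_two hτ i hp) hi hmero (apply_neg_halfp_sub heven hper1 hper2 i) heq
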